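/- arXiv:2507.23697 — 2 statements merged into one kernel-verified Lean document; each statement's English description precedes it below -/
import Mathlib

section
/- Let η ≥ 0 and μ ≥ 0 be real numbers with η + μ > 3. Then there exists a constant C > 0 such that for every x ∈ ℝ³ with x ≠ 0, ∫_{{y ∈ ℝ³ : |y| ≥ 2|x|}} |x − y|^{−η} (1 + |y|)^{−μ} dy ≤ C |x|^{3 − η − μ}. -/
open MeasureTheory

noncomputable section

/-!
On the region `2‖x‖ ≤ ‖y‖` the triangle inequality gives `‖y‖ / 2 ≤ ‖x - y‖`, and
`‖y‖ ≤ 1 + ‖y‖` holds trivially, so the integrand is at most `2 ^ η * ‖y‖ ^ (-(η + μ))`. This bound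
is radial and integrable because `η + μ > 3`; polar coordinates turn its integral into a multiple of
`∫ r in (2‖x‖, ∞), r ^ (2 - η - μ)`, which scales like `‖x‖ ^ (3 - η - μ)`.
-/

/-- Three-dimensional Euclidean space. -/
private abbrev E3 := EuclideanSpace ℝ (Fin 3)

private lemma sq_mul_indicator (s R : ℝ) :
    Set.EqOn (fun r : ℝ => r ^ 2 • (Set.Ici R).indicator (fun t : ℝ => t ^ (-s)) r)
      ((Set.Ici R).indicator (fun r : ℝ => r ^ (2 - s))) (Set.Ioi 0) := by
  intro r hr
  have hr' : (0 : ℝ) < r := hr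
  by_cases h : r ∈ Set.Ici R
  · simp only [Set.indicator_of_mem h, smul_eq_mul]
    rw [sub_eq_add_neg, Real.rpow_add hr', Real.rpow_two]
  · simp [Set.indicator_of_notMem h]

private lemma Ioi_inter_Ici {R : ℝ} (hR : 0 < R) : Set.Ioi 0 ∩ Set.Ici R = Set.Ici R :=
  Set.inter_eq_right.2 fun _ h => lt_of_lt_of_le hR h

private lemma integrable_norm_tail (s R : ℝ) (hs : 3 < s) (hR : 0 < R) :
    Integrable (fun y : E3 => (Set.Ici R).indicator (fun t : ℝ => t ^ (-s)) ‖y‖) := by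
  rw [integrable_fun_norm_addHaar, finrank_euclideanSpace_fin,
    integrableOn_congr_fun (sq_mul_indicator s R) measurableSet_Ioi, IntegrableOn,
    integrable_indicator_iff measurableSet_Ici, IntegrableOn,
    Measure.restrict_restrict measurableSet_Ici, Set.inter_comm, Ioi_inter_Ici hR]
  exact (integrableOn_Ici_iff_integrableOn_Ioi).2
    (integrableOn_Ioi_rpow_of_lt (by linarith) hR)

private lemma integral_norm_tail (s R : ℝ) (hs : 3 < s) (hR : 0 < R) :
    ∫ y : E3, (Set.Ici R).indicator (fun t : ℝ => t ^ (-s)) ‖y‖ =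
      3 * volume.real (Metric.ball (0 : E3) 1) * (R ^ (3 - s) / (s - 3)) := by
  rw [integral_fun_norm_addHaar, finrank_euclideanSpace_fin,
    setIntegral_congr_fun measurableSet_Ioi (sq_mul_indicator s R),
    setIntegral_indicator measurableSet_Ici, Ioi_inter_Ici hR, integral_Ici_eq_integral_Ioi,
    integral_Ioi_rpow_of_lt (by linarith) hR]
  rw [show 2 - s + 1 = -(s - 3) by ring, neg_div_neg_eq, neg_sub, nsmul_eq_mul, smul_eq_mul]
  push_cast
  ring

private lemma integrand_le {η μ : ℝ} (hη : 0 ≤ η) (hμ : 0 ≤ μ) {x y : E3} (hx : x ≠ 0)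
    (hy : 2 * ‖x‖ ≤ ‖y‖) :
    ‖x - y‖ ^ (-η) * (1 + ‖y‖) ^ (-μ) ≤ 2 ^ η * ‖y‖ ^ (-(η + μ)) := by
  have hx0 : 0 < ‖x‖ := norm_pos_iff.2 hx
  have hy0 : 0 < ‖y‖ := by linarith
  have hxy : ‖y‖ / 2 ≤ ‖x - y‖ := by
    have := norm_sub_norm_le y x
    rw [norm_sub_rev] at this
    linarith
  have h1 : ‖x - y‖ ^ (-η) ≤ 2 ^ η * ‖y‖ ^ (-η) := by
    refine (Real.rpow_le_rpow_of_nonpos (by positivity) hxy (by linarith)).trans_eq ?_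
    rw [Real.div_rpow hy0.le (by norm_num), Real.rpow_neg (by norm_num : (0 : ℝ) ≤ 2),
      div_inv_eq_mul, mul_comm]
  have h2 : (1 + ‖y‖) ^ (-μ) ≤ ‖y‖ ^ (-μ) :=
    Real.rpow_le_rpow_of_nonpos hy0 (by linarith) (by linarith)
  calc _ ≤ (2 ^ η * ‖y‖ ^ (-η)) * ‖y‖ ^ (-μ) := by gcongr
    _ = _ := by rw [neg_add, Real.rpow_add hy0, mul_assoc]

/-- Far-field integral estimate: for η, μ ≥ 0 with η + μ > 3 there is C > 0 with
∫_{|y| ≥ 2|x|} |x − y|^{−η} (1 + |y|)^{−μ} dy ≤ C |x|^{3 − η − μ} for all x ≠ 0. -/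
theorem stmt5 (η μ : ℝ) (hη : 0 ≤ η) (hμ : 0 ≤ μ) (hημ : 3 < η + μ) :
    ∃ C : ℝ, 0 < C ∧
      ∀ x : EuclideanSpace ℝ (Fin 3), x ≠ 0 →
        (∫ y in {y : EuclideanSpace ℝ (Fin 3) | 2 * ‖x‖ ≤ ‖y‖},
            ‖x - y‖ ^ (-η) * (1 + ‖y‖) ^ (-μ)) ≤ C * ‖x‖ ^ (3 - η - μ) := by
  have hV : 0 < volume.real (Metric.ball (0 : E3) 1) :=
    ENNReal.toReal_pos (Metric.measure_ball_pos volume _ one_pos).ne' measure_ball_lt_top.ne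
  have hs : 0 < η + μ - 3 := by linarith
  refine ⟨2 ^ η * (3 * volume.real (Metric.ball (0 : E3) 1) *
    (2 ^ (3 - (η + μ)) / (η + μ - 3))), by positivity, fun x hx => ?_⟩
  have hx0 : 0 < ‖x‖ := norm_pos_iff.2 hx
  have hR : 0 < 2 * ‖x‖ := by linarith
  have hmeas : MeasurableSet {y : E3 | 2 * ‖x‖ ≤ ‖y‖} :=
    measurableSet_le measurable_const measurable_norm
  rw [← integral_indicator hmeas]
  calc _ ≤ ∫ y : E3, 2 ^ η *
        (Set.Ici (2 * ‖x‖)).indicator (fun t : ℝ => t ^ (-(η + μ))) ‖y‖ := by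
        -- Only the dominating function needs to be integrable, since the integrand is nonnegative.
        refine integral_mono_of_nonneg (.of_forall fun y => ?_)
          ((integrable_norm_tail (η + μ) _ hημ hR).const_mul _) (.of_forall fun y => ?_)
        · exact Set.indicator_nonneg (fun y _ => by positivity) y
        · by_cases h : 2 * ‖x‖ ≤ ‖y‖
          · simpa [Set.indicator, h] using integrand_le hη hμ hx h
          · simp [Set.indicator, h]
    _ = _ := by
        rw [integral_const_mul, integral_norm_tail _ _ hημ hR,
          Real.mul_rpow (by norm_num) hx0.le, sub_sub]
        ring

end
end

section
/- Let M ∈ ℕ, let A be a real M×M matrix with zᵀAz > 0 for every nonzero z ∈ ℝ^M, let 𝒯 > 0, and let G : ℝ → ℝ^M be continuous with G(t + 𝒯) = G(t) for all t ∈ ℝ. Then there exists exactly one continuously differentiable function α : ℝ → ℝ^M satisfying α(t + 𝒯) = α(t) for all t ∈ ℝ and α′(t) = −A·α(t) + G(t) for all t ∈ ℝ. -/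
/-!
Write `L` for the linear map `z ↦ A z`. The matrix exponential `exp (t L)` is an integrating factor:
`d/dt (exp (t L) α) = exp (t L) (α' + L α)`, which solves the equation explicitly from any initial
value (`exists_solution`) and shows that a solution is periodic as soon as it takes the same value
at `0` and `𝒯` (`periodic_of_endpoints`).

A `𝒯`-periodic solution `d` of the homogeneous equation vanishes: its energy `d ⬝ᵥ d` has
derivative `-2 (d ⬝ᵥ A d) ≤ 0`, so it is antitone and periodic, hence constant, hence
`d ⬝ᵥ A d = 0` (`homogeneous_eq_zero`). This yields uniqueness at once. It also shows that
`exp (𝒯 L) - 1` is injective, since a fixed vector of `exp (𝒯 L)` is the initial value of a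
periodic homogeneous solution. By finite dimensionality `exp (𝒯 L) - 1` is surjective, and this is
what is needed to choose an initial value whose solution closes up after time `𝒯`.
-/

open Matrix

noncomputable section

section Exponential

variable {E : Type*} [NormedAddCommGroup E] [NormedSpace ℝ E] [CompleteSpace E]

lemma exp_neg_apply_exp_apply (L : E →L[ℝ] E) (t : ℝ) (x : E) :
    NormedSpace.exp (t • (-L)) (NormedSpace.exp (t • L) x) = x := by
  have h : NormedSpace.exp (t • (-L)) * NormedSpace.exp (t • L) = 1 := by
    let _ : NormedAlgebra ℚ (E →L[ℝ] E) := .restrictScalars ℚ ℝ (E →L[ℝ] E)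
    rw [smul_neg]
    refine (NormedSpace.exp_add_of_commute (Commute.neg_left (Commute.refl (t • L)))).symm.trans ?_
    rw [neg_add_cancel, NormedSpace.exp_zero]
  simpa using congrArg (fun F : E →L[ℝ] E => F x) h

/-- Variation of constants, with the integral hidden: the solution with initial value `c`
takes at time `T` the value `exp (-T L) (c + w)`, where `w` does not depend on `c`. -/
lemma exists_solution (L : E →L[ℝ] E) (G : ℝ → E) (hG : Continuous G) (T : ℝ) :
    ∃ w : E, ∀ c : E, ∃ α : ℝ → E, (∀ t, HasDerivAt α (-(L (α t)) + G t) t) ∧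
      α 0 = c ∧ α T = NormedSpace.exp (T • (-L)) (c + w) := by
  have hexp : Continuous fun s : ℝ => NormedSpace.exp (s • L) :=
    continuous_iff_continuousAt.2 fun s => (hasDerivAt_exp_smul_const L s).continuousAt
  have hc : Continuous fun s : ℝ => NormedSpace.exp (s • L) (G s) := hexp.clm_apply hG
  refine ⟨∫ s in (0 : ℝ)..T, NormedSpace.exp (s • L) (G s), fun c =>
    ⟨fun t => NormedSpace.exp (t • (-L))
      (c + ∫ s in (0 : ℝ)..t, NormedSpace.exp (s • L) (G s)), fun t => ?_, by simp, rfl⟩⟩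
  have h1 := hasDerivAt_exp_smul_const' (-L) t
  have h2 := (hc.integral_hasStrictDerivAt 0 t).hasDerivAt.const_add c
  refine (h1.clm_apply h2).congr_deriv ?_
  rw [exp_neg_apply_exp_apply]
  rfl

lemma homogeneous_eq_exp (L : E →L[ℝ] E) (d : ℝ → E)
    (hd : ∀ t, HasDerivAt d (-(L (d t))) t) (t : ℝ) :
    NormedSpace.exp (t • L) (d t) = d 0 := by
  have h : ∀ s, HasDerivAt (fun s => NormedSpace.exp (s • L) (d s)) 0 s := fun s => by
    convert (hasDerivAt_exp_smul_const L s).clm_apply (hd s) using 1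
    simp
  have := is_const_of_deriv_eq_zero (fun s => (h s).differentiableAt) (fun s => (h s).deriv) t 0
  simpa using this

lemma periodic_of_endpoints (L : E →L[ℝ] E) (G α : ℝ → E) (T : ℝ)
    (hGper : ∀ t, G (t + T) = G t) (hα : ∀ t, HasDerivAt α (-(L (α t)) + G t) t)
    (h : α T = α 0) (t : ℝ) : α (t + T) = α t := by
  -- The time-shifted solution solves the same equation, so the difference is homogeneous.
  have hd : ∀ s, HasDerivAt (fun s => α (s + T) - α s) (-(L (α (s + T) - α s))) s := fun s => by
    refine (((hα (s + T)).comp_add_const s T).sub (hα s)).congr_deriv ?_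
    rw [hGper, map_sub]
    abel
  have h0 := homogeneous_eq_exp L _ hd t
  have h1 := exp_neg_apply_exp_apply L t (α (t + T) - α t)
  rw [h0] at h1
  simp only [zero_add, h, sub_self, map_zero] at h1
  exact sub_eq_zero.1 h1.symm

end Exponential

lemma antitone_periodic_const (φ : ℝ → ℝ) (T : ℝ) (hT : 0 < T) (hφ : Antitone φ)
    (hper : Function.Periodic φ T) (s t : ℝ) : φ s = φ t := by
  have key : ∀ s t, φ s ≤ φ t := fun s t => by
    obtain ⟨n, hn⟩ := exists_nat_ge ((t - s) / T)
    rw [div_le_iff₀ hT] at hn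
    rw [← hper.nat_mul n s]
    exact hφ (by linarith)
  exact le_antisymm (key s t) (key t s)

lemma homogeneous_eq_zero {M : ℕ} (A : Matrix (Fin M) (Fin M) ℝ)
    (hA : ∀ z : Fin M → ℝ, z ≠ 0 → 0 < z ⬝ᵥ A.mulVec z) (T : ℝ) (hT : 0 < T)
    (d : ℝ → Fin M → ℝ) (hd : ∀ t, HasDerivAt d (-(A.mulVec (d t))) t)
    (hper : ∀ t, d (t + T) = d t) (t : ℝ) : d t = 0 := by
  have hφ : ∀ t, HasDerivAt (fun t => d t ⬝ᵥ d t) (-2 * (d t ⬝ᵥ A.mulVec (d t))) t := fun t => by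
    have hi := hasDerivAt_pi.1 (hd t)
    refine (HasDerivAt.fun_sum (u := Finset.univ) fun i _ => (hi i).mul (hi i)).congr_deriv ?_
    rw [dotProduct, Finset.mul_sum]
    refine Finset.sum_congr rfl fun i _ => ?_
    simp only [Pi.neg_apply]
    ring
  have hnonneg : ∀ z : Fin M → ℝ, 0 ≤ z ⬝ᵥ A.mulVec z := fun z => by
    by_cases hz : z = 0
    · simp [hz]
    · exact (hA z hz).le
  have hanti : Antitone fun t => d t ⬝ᵥ d t :=
    antitone_of_deriv_nonpos (fun t => (hφ t).differentiableAt) fun t => by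
      rw [(hφ t).deriv]
      linarith [hnonneg (d t)]
  have hconst : (fun t => d t ⬝ᵥ d t) = fun _ => d 0 ⬝ᵥ d 0 := funext fun t =>
    antitone_periodic_const _ T hT hanti (fun t => by simp only [hper]) t 0
  have hzero := hφ t
  rw [hconst] at hzero
  have h0 := hzero.unique (hasDerivAt_const t _)
  by_contra hne
  linarith [hA _ hne]

/-- If zᵀAz > 0 for all nonzero z, 𝒯 > 0 and G : ℝ → ℝ^M is continuous and
𝒯-periodic, then there is exactly one continuously differentiable 𝒯-periodic
α : ℝ → ℝ^M with α′(t) = −A·α(t) + G(t) for all t. -/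
theorem stmt16 (M : ℕ) (A : Matrix (Fin M) (Fin M) ℝ)
    (hA : ∀ z : Fin M → ℝ, z ≠ 0 → 0 < z ⬝ᵥ A.mulVec z)
    (𝒯 : ℝ) (h𝒯 : 0 < 𝒯) (G : ℝ → Fin M → ℝ)
    (hG : Continuous G) (hGper : ∀ t, G (t + 𝒯) = G t) :
    ∃! α : ℝ → Fin M → ℝ,
      ContDiff ℝ 1 α ∧ (∀ t, α (t + 𝒯) = α t) ∧
        ∀ t, deriv α t = -A.mulVec (α t) + G t := by
  let L : (Fin M → ℝ) →L[ℝ] (Fin M → ℝ) := LinearMap.toContinuousLinearMap A.mulVecLin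
  have hL : ∀ z, L z = A.mulVec z := fun z => rfl
  let F : (Fin M → ℝ) →ₗ[ℝ] (Fin M → ℝ) :=
    (NormedSpace.exp (𝒯 • L) - 1 : (Fin M → ℝ) →L[ℝ] (Fin M → ℝ)).toLinearMap
  have hF : ∀ c, F c = NormedSpace.exp (𝒯 • L) c - c := fun c => rfl
  have hinj : Function.Injective F := by
    rw [injective_iff_map_eq_zero]
    intro c hc
    rw [hF, sub_eq_zero] at hc
    have hc' : NormedSpace.exp (𝒯 • (-L)) c = c := by
      conv_lhs => rw [← hc]
      exact exp_neg_apply_exp_apply L 𝒯 c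
    let d : ℝ → Fin M → ℝ := fun t => NormedSpace.exp (t • (-L)) c
    have hd : ∀ t, HasDerivAt d (-(L (d t))) t := fun t => by
      refine ((hasDerivAt_exp_smul_const' (-L) t).clm_apply (hasDerivAt_const t c)).congr_deriv ?_
      rw [map_zero, add_zero]
      rfl
    have hper := periodic_of_endpoints L 0 d 𝒯 (fun _ => rfl) (fun t => by simpa using hd t)
      (by simpa [d] using hc')
    simpa [d] using homogeneous_eq_zero A hA 𝒯 h𝒯 d hd hper 0
  have hsurj : Function.Surjective F := LinearMap.injective_iff_surjective.1 hinj
  obtain ⟨w, hw⟩ := exists_solution L G hG 𝒯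
  -- The closing condition `exp (-𝒯 L) (c + w) = c` is equivalent to `(exp (𝒯 L) - 1) c = w`.
  obtain ⟨c, hc⟩ := hsurj w
  obtain ⟨α, hα, hα0, hαT⟩ := hw c
  have hclose : α 𝒯 = α 0 := by
    rw [hαT, hα0, ← hc, hF, add_sub_cancel, exp_neg_apply_exp_apply]
  refine ⟨α, ⟨?_, periodic_of_endpoints L G α 𝒯 hGper hα hclose, fun t => (hα t).deriv⟩, ?_⟩
  · have hαd : Differentiable ℝ α := fun t => (hα t).differentiableAt
    refine contDiff_one_iff_deriv.2 ⟨hαd, ?_⟩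
    rw [show deriv α = fun t => -(L (α t)) + G t from funext fun t => (hα t).deriv]
    exact (L.continuous.comp hαd.continuous).neg.add hG
  · rintro β ⟨hβ1, hβper, hβ⟩
    have hβd : ∀ t, HasDerivAt β (-(L (β t)) + G t) t := fun t => by
      have := (hβ1.differentiable one_ne_zero t).hasDerivAt
      rwa [hβ t] at this
    have hd : ∀ t, HasDerivAt (fun t => β t - α t) (-(A.mulVec (β t - α t))) t := fun t => by
      refine ((hβd t).sub (hα t)).congr_deriv ?_
      rw [hL, hL, Matrix.mulVec_sub]
      abel
    have hαper := periodic_of_endpoints L G α 𝒯 hGper hα hclose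
    funext t
    exact sub_eq_zero.1 (homogeneous_eq_zero A hA 𝒯 h𝒯 _ hd
      (fun t => by rw [hβper, hαper]) t)

end
end
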